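/- Every connected unweighted graph G on n vertices and every set 𝒫 ⊆ V × V of vertex pairs admits a subgraph H with at most C·n·|𝒫|^{1/4} edges (for a universal constant C) such that d_H(s,t) ≤ d_G(s,t) + 6 for every pair (s,t) ∈ 𝒫. -/

import Mathlib

open scoped Classical

/-!
Write `n` for the number of vertices and `q = |P| ^ (1 / 4)`. Group vertices into at most `n / q`
stars of size about `q`, and keep the `O(n q)` edges that touch an unclustered vertex or join a
vertex to its center. A shortest path meets each star at most three times, since two vertices of
one star are at distance at most `2`; so many missing edges means many clusters met.

For each pair in `P`, buy the first and the last `L = n / q ^ 3` missing edges of a shortest path: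
`O(n q)` edges in total. Either this completes the path, or each of its two ends meets more than
`L / 3` clusters, and a set `R` of `O(q ^ 2)` centers hits both ends for at least half of the pairs.
Path buying provides a `+2` spanner for `R × R` at the price of a constant number of edges for each
of the `|R| * (n / q) = O(n q)` pairs of a vertex of `R` and a center: a path that is not yet
approximated improves the distance from one of its endpoints to every cluster it meets. Replacing
the middle of a path by a detour between two centers in `R` costs `2` at each end, hence `+6`.

Repeating this with the pairs that were missed gives a geometric series.
-/

open scoped Finset

theorem exists_le_card_filter_lt_eq_card_filter_gt_eq {α : Type*} [LinearOrder α] (s : Finset α)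
    {k : ℕ} (hk : 2 * k < #s) :
    ∃ x ∈ s, ∃ y ∈ s, x ≤ y ∧ #{z ∈ s | z < x} = k ∧ #{z ∈ s | y < z} = k := by
  obtain ⟨n, hn⟩ : ∃ n, #s = n := ⟨_, rfl⟩
  obtain ⟨e, rfl⟩ : ∃ e : Fin n ↪o α, Finset.univ.map e.toEmbedding = s :=
    ⟨s.orderEmbOfFin hn, s.map_orderEmbOfFin_univ hn⟩
  let i : Fin n := ⟨k, by omega⟩
  let j : Fin n := ⟨n - 1 - k, by omega⟩
  have hij : i ≤ j := Fin.mk_le_mk.mpr (by omega)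
  refine ⟨e i, by simp, e j, by simp, e.monotone hij, ?_, ?_⟩ <;>
    rw [Finset.filter_map, Finset.card_map]
  · simp [i, Finset.filter_gt_eq_Iio]
  · simp [j, Finset.filter_lt_eq_Ioi]
    omega

theorem card_filter_mem_add_card_filter_disjoint_insert {ι V : Type*} (I : Finset ι)
    (F : ι → Finset V) (R : Finset V) (v : V) :
    #{i ∈ {i ∈ I | Disjoint (F i) R} | v ∈ F i} + #{i ∈ I | Disjoint (F i) (insert v R)} =
      #{i ∈ I | Disjoint (F i) R} := by
  rw [← Finset.card_filter_add_card_filter_not (s := {i ∈ I | Disjoint (F i) R}) (v ∈ F ·)]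
  congr 2
  ext i
  simp [and_right_comm, ← and_assoc]

theorem exists_hitting_set {ι V : Type*} (I : Finset ι) (F : ι → Finset V) {Z : Finset V}
    {k c : ℝ} (hk : 0 < k) (hc : 0 < c) (hFZ : ∀ i ∈ I, F i ⊆ Z) (hF : ∀ i ∈ I, (F i).Nonempty)
    (hZ : ∀ i ∈ I, (#Z : ℝ) ≤ k * #(F i)) :
    ∃ R : Finset V, (#R : ℝ) ≤ c * k ∧ c * #{i ∈ I | Disjoint (F i) R} ≤ #I := by
  rcases I.eq_empty_or_nonempty with rfl | hI
  · exact ⟨∅, by simpa using (mul_pos hc hk).le, by simp⟩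
  have hI_pos : (0 : ℝ) < #I := by exact_mod_cast hI.card_pos
  have hZ_pos : (0 : ℝ) < #Z := by
    obtain ⟨i, hi⟩ := hI
    exact_mod_cast ((hF i hi).mono (hFZ i hi)).card_pos
  let unhit (R : Finset V) : Finset ι := {i ∈ I | Disjoint (F i) R}
  -- For a minimizer of this potential, inserting one more vertex into `R` does not pay off.
  obtain ⟨R, hRZ, hmin⟩ := Finset.exists_min_image Z.powerset
    (fun R => c * k * #(unhit R) + #R * #I) ⟨∅, by simp⟩
  rw [Finset.mem_powerset] at hRZ
  refine ⟨R, ?_, ?_⟩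
  · have hempty : c * k * #(unhit R) + #R * #I ≤ c * k * #I := by
      simpa [unhit] using hmin ∅ (by simp)
    have hunhit : 0 ≤ c * k * #(unhit R) := by positivity
    exact le_of_mul_le_mul_right (by linarith) hI_pos
  · have hgain : ∀ v ∈ Z, (#{i ∈ unhit R | v ∈ F i} : ℝ) ≤ #I / (c * k) := by
      intro v hv
      have hinsert := hmin (insert v R) (by simp [Finset.insert_subset_iff, hv, hRZ])
      have hcard : (#(insert v R) : ℝ) ≤ #R + 1 := by exact_mod_cast Finset.card_insert_le v R
      have hsplit : (#{i ∈ unhit R | v ∈ F i} : ℝ) + #(unhit (insert v R)) = #(unhit R) := by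
        exact_mod_cast card_filter_mem_add_card_filter_disjoint_insert I F R v
      have hcost : (#(insert v R) : ℝ) * #I ≤ (#R + 1) * #I := by gcongr
      rw [le_div_iff₀ (by positivity)]
      linear_combination hinsert + hcost + c * k * hsplit
    have hdouble : (#(unhit R) : ℝ) * (#Z / k) ≤ #Z * (#I / (c * k)) := by
      simp only [← nsmul_eq_mul]
      refine Finset.card_nsmul_le_card_nsmul (fun i v => v ∈ F i) (fun i hi => ?_) hgain
      have hiI := (Finset.mem_filter.mp hi).1
      rw [Finset.bipartiteAbove, Finset.filter_mem_eq_inter,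
        Finset.inter_eq_right.mpr (hFZ i hiI), div_le_iff₀' hk]
      exact hZ i hiI
    field_simp at hdouble
    linarith

/-! ### Geodesics -/

variable {V : Type*} {G H H₀ H' : SimpleGraph V}

theorem ncard_edgeSet_sup_le [Finite V] (G H : SimpleGraph V) :
    (G ⊔ H).edgeSet.ncard ≤ G.edgeSet.ncard + H.edgeSet.ncard := by
  rw [SimpleGraph.edgeSet_sup]
  exact Set.ncard_union_le _ _

theorem ncard_edgeSet_biSup_le {ι : Type*} (s : Finset ι) (G : ι → SimpleGraph V) :
    (⨆ i ∈ s, G i).edgeSet.ncard ≤ ∑ i ∈ s, (G i).edgeSet.ncard := by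
  simp only [SimpleGraph.edgeSet_iSup]
  exact s.set_ncard_biUnion_le _

theorem edist_le_one_of_adj {u v : V} (h : G.Adj u v) : G.edist u v ≤ 1 :=
  (SimpleGraph.edist_eq_one_iff_adj.mpr h).le

theorem edist_le_sub_of_forall_adj_succ {p : ℕ → V} {i j : ℕ} (hij : i ≤ j)
    (h : ∀ k, i ≤ k → k < j → G.Adj (p k) (p (k + 1))) :
    G.edist (p i) (p j) ≤ (j - i : ℕ) := by
  induction j, hij using Nat.le_induction with
  | base => simp
  | succ j hij ih =>
    calc G.edist (p i) (p (j + 1)) ≤ G.edist (p i) (p j) + G.edist (p j) (p (j + 1)) :=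
          SimpleGraph.edist_triangle
      _ ≤ (j - i : ℕ) + 1 := add_le_add (ih fun k hk hkj => h k hk (by omega))
          (edist_le_one_of_adj (h j hij j.lt_succ_self))
      _ = (j + 1 - i : ℕ) := by norm_cast; omega

/-- `p 0, …, p ℓ` is a shortest path of `G`; the values of `p` beyond `ℓ` are irrelevant. -/
def IsGeodesic (G : SimpleGraph V) (p : ℕ → V) (ℓ : ℕ) : Prop :=
  ∀ ⦃i j⦄, i ≤ j → j ≤ ℓ → G.edist (p i) (p j) = (j - i : ℕ)

theorem exists_isGeodesic {s t : V} (hst : G.Reachable s t) :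
    ∃ p ℓ, IsGeodesic G p ℓ ∧ p 0 = s ∧ p ℓ = t := by
  obtain ⟨w, hw⟩ := hst.exists_walk_length_eq_edist
  have hle {i j : ℕ} (hij : i ≤ j) (hj : j ≤ w.length) :
      G.edist (w.getVert i) (w.getVert j) ≤ (j - i : ℕ) :=
    edist_le_sub_of_forall_adj_succ hij fun k _ hk => w.adj_getVert_succ (by omega)
  refine ⟨w.getVert, w.length, fun i j hij hj => (hle hij hj).antisymm ?_, by simp, by simp⟩
  have hdetour : (w.length : ℕ∞) ≤
      i + (G.edist (w.getVert i) (w.getVert j) + (w.length - j : ℕ)) := by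
    calc (w.length : ℕ∞) = G.edist (w.getVert 0) (w.getVert w.length) := by simpa using hw
      _ ≤ G.edist (w.getVert 0) (w.getVert i) + G.edist (w.getVert i) (w.getVert w.length) :=
        SimpleGraph.edist_triangle
      _ ≤ _ := add_le_add (hle i.zero_le (by omega)) <|
        SimpleGraph.edist_triangle.trans <| add_le_add_right (hle hj le_rfl) _
  obtain ⟨m, hm⟩ := ENat.ne_top_iff_exists.mp ((hle hij hj).trans_lt (ENat.natCast_lt_top _)).ne
  rw [← hm] at hdetour ⊢
  norm_cast at hdetour ⊢
  omega

/-- The indices of the edges of the path `p 0, …, p ℓ` that are absent from `H`. -/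
noncomputable def missingSteps (H : SimpleGraph V) (p : ℕ → V) (ℓ : ℕ) : Finset ℕ :=
  {i ∈ Finset.range ℓ | ¬ H.Adj (p i) (p (i + 1))}

theorem mem_missingSteps {p : ℕ → V} {ℓ i : ℕ} :
    i ∈ missingSteps H p ℓ ↔ i < ℓ ∧ ¬ H.Adj (p i) (p (i + 1)) := by
  simp [missingSteps]

/-- The graph whose edges are the steps `p i, p (i + 1)` with `i ∈ J`. -/
noncomputable def stepGraph (p : ℕ → V) (J : Finset ℕ) : SimpleGraph V :=
  SimpleGraph.fromEdgeSet (J.image fun i => s(p i, p (i + 1)))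

theorem ncard_edgeSet_stepGraph_le (p : ℕ → V) (J : Finset ℕ) :
    (stepGraph p J).edgeSet.ncard ≤ #J := by
  rw [stepGraph, SimpleGraph.edgeSet_fromEdgeSet]
  calc _ ≤ (J.image fun i => s(p i, p (i + 1)) : Set (Sym2 V)).ncard :=
        Set.ncard_le_ncard Set.sdiff_subset (Finset.finite_toSet _)
    _ ≤ #J := by rw [Set.ncard_coe_finset]; exact Finset.card_image_le

namespace IsGeodesic

variable {p : ℕ → V} {ℓ : ℕ}

theorem edist_zero_left (hp : IsGeodesic G p ℓ) {i : ℕ} (hi : i ≤ ℓ) : G.edist (p 0) (p i) = i := by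
  simpa using hp i.zero_le hi

theorem adj_succ (hp : IsGeodesic G p ℓ) {i : ℕ} (hi : i < ℓ) : G.Adj (p i) (p (i + 1)) := by
  rw [← SimpleGraph.edist_eq_one_iff_adj, hp i.le_succ hi]
  norm_num

theorem stepGraph_le (hp : IsGeodesic G p ℓ) {J : Finset ℕ} (hJ : ∀ i ∈ J, i < ℓ) :
    stepGraph p J ≤ G := by
  intro u v huv
  simp only [stepGraph, SimpleGraph.fromEdgeSet_adj, Finset.coe_image, Set.mem_image] at huv
  obtain ⟨⟨i, hi, he⟩, -⟩ := huv
  rw [← SimpleGraph.mem_edgeSet, ← he]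
  exact hp.adj_succ (hJ i hi)

theorem edist_le_sub (hp : IsGeodesic G p ℓ) {J : Finset ℕ} (hH₀ : H₀ ≤ H)
    (hJH : stepGraph p J ≤ H) {i j : ℕ} (hij : i ≤ j) (hj : j ≤ ℓ)
    (hJ : ∀ k ∈ missingSteps H₀ p ℓ, i ≤ k → k < j → k ∈ J) :
    H.edist (p i) (p j) ≤ (j - i : ℕ) := by
  refine edist_le_sub_of_forall_adj_succ hij fun k hik hkj => ?_
  have hkℓ : k < ℓ := by omega
  by_cases hk : H₀.Adj (p k) (p (k + 1))
  · exact hH₀ hk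
  · have hkJ : k ∈ J := hJ k (mem_missingSteps.mpr ⟨hkℓ, hk⟩) hik hkj
    refine hJH ?_
    simp only [stepGraph, SimpleGraph.fromEdgeSet_adj]
    exact ⟨Finset.mem_image_of_mem _ hkJ, (hp.adj_succ hkℓ).ne⟩

theorem sup_stepGraph_missingSteps (hp : IsGeodesic G p ℓ) (hH : H ≤ G) :
    IsGeodesic (H ⊔ stepGraph p (missingSteps H p ℓ)) p ℓ := by
  refine fun i j hij hj => le_antisymm ?_ ?_
  · exact hp.edist_le_sub le_sup_left le_sup_right hij hj fun _ hk _ _ => hk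
  · exact hp hij hj ▸ SimpleGraph.edist_anti
      (sup_le hH (hp.stepGraph_le fun _ hk => (mem_missingSteps.mp hk).1))

end IsGeodesic

/-- `H` is a pairwise `+β` spanner of `G` for the pairs `P`. Distances are extended, so pairs that
`G` does not connect impose no condition. -/
structure IsPairwiseSpanner (G H : SimpleGraph V) (P : Set (V × V)) (β : ℕ∞) : Prop where
  le : H ≤ G
  edist_le : ∀ ⦃s t : V⦄, (s, t) ∈ P → H.edist s t ≤ G.edist s t + β

theorem IsPairwiseSpanner.union {P P' : Set (V × V)} {β : ℕ∞} (h : IsPairwiseSpanner G H P β)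
    (h' : IsPairwiseSpanner G H' P' β) : IsPairwiseSpanner G (H ⊔ H') (P ∪ P') β where
  le := sup_le h.le h'.le
  edist_le := by
    rintro s t (hst | hst)
    · exact (SimpleGraph.edist_anti le_sup_left).trans (h.edist_le hst)
    · exact (SimpleGraph.edist_anti le_sup_right).trans (h'.edist_le hst)

/-! ### Clusterings -/

/-- A partition of some of the vertices of `G` into stars: a vertex may be assigned to a neighbor,
its center. Centers need not belong to their own cluster, and vertices sent to `none` are
unclustered. -/
structure Clustering (G : SimpleGraph V) where
  center : V → Option V
  adj_center : ∀ ⦃u c : V⦄, center u = some c → G.Adj u c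

namespace Clustering

variable (𝒞 : Clustering G)

/-- The edges every spanner built from the clustering keeps: those with an unclustered endpoint, and
those joining a clustered vertex to its center. -/
def skeleton : SimpleGraph V where
  Adj u v := G.Adj u v ∧ (𝒞.center u = none ∨ 𝒞.center v = none ∨
    𝒞.center u = some v ∨ 𝒞.center v = some u)
  symm := ⟨fun _ _ h => ⟨h.1.symm, by tauto⟩⟩
  loopless := ⟨fun _ h => h.1.ne rfl⟩

/-- The centers of the clusters that meet `s`. -/
noncomputable def centers (s : Finset V) : Finset V :=
  (s.image 𝒞.center).eraseNone

theorem skeleton_le : 𝒞.skeleton ≤ G :=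
  fun _ _ h => h.1

theorem mem_centers {s : Finset V} {c : V} : c ∈ 𝒞.centers s ↔ ∃ u ∈ s, 𝒞.center u = some c := by
  simp [centers]

theorem centers_mono {s t : Finset V} (hst : s ⊆ t) : 𝒞.centers s ⊆ 𝒞.centers t :=
  Finset.eraseNone.monotone (Finset.image_subset_image hst)

variable {𝒞}

theorem skeleton_adj_center {u c : V} (h : 𝒞.center u = some c) : 𝒞.skeleton.Adj u c :=
  ⟨𝒞.adj_center h, by tauto⟩

theorem center_ne_none_of_not_adj {u v : V} (hG : G.Adj u v) (h : ¬ 𝒞.skeleton.Adj u v) :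
    𝒞.center u ≠ none ∧ 𝒞.center v ≠ none := by
  simp only [skeleton] at h
  tauto

theorem edist_le_two_of_center_eq {u v c : V} (hu : 𝒞.center u = some c)
    (hv : 𝒞.center v = some c) : G.edist u v ≤ 2 :=
  calc G.edist u v ≤ G.edist u c + G.edist c v := SimpleGraph.edist_triangle
    _ ≤ 1 + 1 := add_le_add (edist_le_one_of_adj (𝒞.adj_center hu))
        (edist_le_one_of_adj (𝒞.adj_center hv).symm)
    _ = 2 := one_add_one_eq_two

theorem card_le_three_mul_card_centers {p : ℕ → V} {ℓ : ℕ} (hp : IsGeodesic G p ℓ) {J : Finset ℕ}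
    (hJ : ∀ j ∈ J, j ≤ ℓ) (hclustered : ∀ j ∈ J, 𝒞.center (p j) ≠ none) :
    #J ≤ 3 * #(𝒞.centers (J.image p)) := by
  have hnone : none ∉ J.image (𝒞.center ∘ p) := by simpa using hclustered
  rw [centers, Finset.image_image, Finset.card_eraseNone_of_not_mem hnone]
  refine Finset.card_le_mul_card_image J 3 fun o ho => ?_
  obtain ⟨c, rfl⟩ := Option.ne_none_iff_exists'.mp (ne_of_mem_of_not_mem ho hnone)
  obtain ⟨m, hm, hmin⟩ := Finset.exists_min_image {j ∈ J | 𝒞.center (p j) = some c} id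
    (by simpa [Finset.Nonempty] using ho)
  have hwithin : {j ∈ J | 𝒞.center (p j) = some c} ⊆ Finset.Icc m (m + 2) := by
    intro j hj
    have hmj : m ≤ j := hmin j hj
    rw [Finset.mem_filter] at hm hj
    have hdist := edist_le_two_of_center_eq hm.2 hj.2
    rw [hp hmj (hJ j hj.1)] at hdist
    norm_cast at hdist
    exact Finset.mem_Icc.mpr ⟨hmj, by omega⟩
  calc _ ≤ #(Finset.Icc m (m + 2)) := Finset.card_le_card hwithin
    _ = 3 := by rw [Nat.card_Icc]; omega

theorem card_missingSteps_le {p : ℕ → V} {ℓ : ℕ} (hp : IsGeodesic G p ℓ) (hH : 𝒞.skeleton ≤ H) :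
    #(missingSteps H p ℓ) ≤ 3 * #(𝒞.centers ((missingSteps H p ℓ).image p)) := by
  refine card_le_three_mul_card_centers hp (fun _ hi => (mem_missingSteps.mp hi).1.le) ?_
  intro i hi
  obtain ⟨hiℓ, hmissing⟩ := mem_missingSteps.mp hi
  exact (center_ne_none_of_not_adj (hp.adj_succ hiℓ) fun h => hmissing (hH h)).1

theorem edist_le_of_detour {p : ℕ → V} {ℓ i j : ℕ} {a b : V} {β : ℕ∞} (hp : IsGeodesic G p ℓ)
    (hij : i ≤ j) (hj : j ≤ ℓ) (hH : 𝒞.skeleton ≤ H) (hprefix : H.edist (p 0) (p i) ≤ i)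
    (hsuffix : H.edist (p j) (p ℓ) ≤ (ℓ - j : ℕ)) (ha : 𝒞.center (p i) = some a)
    (hb : 𝒞.center (p j) = some b) (hab : H.edist a b ≤ G.edist a b + β) :
    H.edist (p 0) (p ℓ) ≤ ℓ + (β + 4) := by
  have hab_G : G.edist a b ≤ 1 + ((j - i : ℕ) + 1) :=
    calc G.edist a b ≤ G.edist a (p i) + (G.edist (p i) (p j) + G.edist (p j) b) :=
          SimpleGraph.edist_triangle.trans (add_le_add_right SimpleGraph.edist_triangle _)
      _ ≤ _ := add_le_add (edist_le_one_of_adj (𝒞.adj_center ha).symm)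
          (add_le_add (hp hij hj).le (edist_le_one_of_adj (𝒞.adj_center hb)))
  have hend : H.edist b (p ℓ) ≤ 1 + (ℓ - j : ℕ) :=
    SimpleGraph.edist_triangle.trans
      (add_le_add (edist_le_one_of_adj (hH (skeleton_adj_center hb)).symm) hsuffix)
  have hstart : H.edist (p 0) a ≤ i + 1 :=
    SimpleGraph.edist_triangle.trans
      (add_le_add hprefix (edist_le_one_of_adj (hH (skeleton_adj_center ha))))
  calc H.edist (p 0) (p ℓ) ≤ H.edist (p 0) a + (H.edist a b + H.edist b (p ℓ)) :=
        SimpleGraph.edist_triangle.trans (add_le_add_right SimpleGraph.edist_triangle _)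
    _ ≤ (i + 1) + ((1 + ((j - i : ℕ) + 1) + β) + (1 + (ℓ - j : ℕ))) :=
        add_le_add hstart (add_le_add (hab.trans (add_le_add_left hab_G β)) hend)
    _ = (i + (j - i) + (ℓ - j) : ℕ) + (β + 4) := by push_cast; ring
    _ = ℓ + (β + 4) := by congr 2; omega

section Existence

variable [Fintype V]

/-- The set of vertices assigned to `c`. -/
noncomputable def cluster (𝒞 : Clustering G) (c : V) : Finset V :=
  {u | 𝒞.center u = some c}

/-- The neighbors of `v` that belong to no cluster. -/
noncomputable def unclusteredNeighbors (𝒞 : Clustering G) (v : V) : Finset V :=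
  {u | G.Adj v u ∧ 𝒞.center u = none}

/-- The clustering obtained by assigning all unclustered neighbors of `v` to `v`. -/
noncomputable def attach (𝒞 : Clustering G) (v : V) : Clustering G where
  center u := if u ∈ 𝒞.unclusteredNeighbors v then some v else 𝒞.center u
  adj_center u c h := by
    split_ifs at h with hu
    · obtain rfl := Option.some.inj h
      exact (Finset.mem_filter.mp hu).2.1.symm
    · exact 𝒞.adj_center h

theorem le_card_cluster_attach {d : ℕ}
    (h : ∀ c ∈ 𝒞.centers Finset.univ, d ≤ #(𝒞.cluster c)) {v : V}
    (hv : d ≤ #(𝒞.unclusteredNeighbors v)) {c : V} (hc : c ∈ (𝒞.attach v).centers Finset.univ) :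
    d ≤ #((𝒞.attach v).cluster c) := by
  obtain ⟨u, -, huc⟩ := (mem_centers _).mp hc
  by_cases hu : u ∈ 𝒞.unclusteredNeighbors v
  · obtain rfl : v = c := by simpa [attach, hu] using huc
    refine hv.trans (Finset.card_le_card fun x hx => ?_)
    simp [cluster, attach, hx]
  · have hc_old : c ∈ 𝒞.centers Finset.univ :=
      (mem_centers _).mpr ⟨u, Finset.mem_univ u, by simpa [attach, hu] using huc⟩
    refine (h c hc_old).trans (Finset.card_le_card fun x hx => ?_)
    simp_all [cluster, attach, unclusteredNeighbors]

theorem card_unclustered_attach_lt {v : V} (hv : (𝒞.unclusteredNeighbors v).Nonempty) :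
    #{u | (𝒞.attach v).center u = none} < #{u | 𝒞.center u = none} := by
  obtain ⟨u, hu⟩ := hv
  have hu_none : 𝒞.center u = none := (Finset.mem_filter.mp hu).2.2
  refine Finset.card_lt_card <| (Finset.ssubset_iff_of_subset fun x => ?_).mpr ⟨u, ?_, ?_⟩ <;>
    rw [Finset.mem_filter_univ]
  · by_cases hx : x ∈ 𝒞.unclusteredNeighbors v <;> simp [attach, hx]
  · exact hu_none
  · simp [attach, hu]

theorem exists_card_unclusteredNeighbors_lt (G : SimpleGraph V) {d : ℕ} (hd : 0 < d) :
    ∃ 𝒞 : Clustering G, (∀ c ∈ 𝒞.centers Finset.univ, d ≤ #(𝒞.cluster c)) ∧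
      ∀ v, #(𝒞.unclusteredNeighbors v) < d := by
  obtain ⟨𝒞, hlarge, hmin⟩ := WellFounded.has_min
    (measure fun 𝒞 : Clustering G => #{u | 𝒞.center u = none}).wf
    {𝒞 | ∀ c ∈ 𝒞.centers Finset.univ, d ≤ #(𝒞.cluster c)}
    ⟨⟨fun _ => none, by simp⟩, by simp [mem_centers]⟩
  refine ⟨𝒞, hlarge, fun v => ?_⟩
  by_contra! hv
  exact hmin (𝒞.attach v) (fun _ => le_card_cluster_attach hlarge hv)
    (card_unclustered_attach_lt (Finset.card_pos.mp (hd.trans_le hv)))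

theorem card_centers_mul_le {d : ℕ} (h : ∀ c ∈ 𝒞.centers Finset.univ, d ≤ #(𝒞.cluster c)) :
    #(𝒞.centers Finset.univ) * d ≤ Fintype.card V :=
  calc #(𝒞.centers Finset.univ) * d ≤ ∑ c ∈ 𝒞.centers Finset.univ, #(𝒞.cluster c) :=
        Finset.card_nsmul_le_sum _ _ _ h
    _ = #((𝒞.centers Finset.univ).biUnion 𝒞.cluster) := by
        refine (Finset.card_biUnion fun c _ c' _ hcc' => Finset.disjoint_left.mpr ?_).symm
        simp_all [cluster]
    _ ≤ Fintype.card V := Finset.card_le_univ _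

theorem ncard_edgeSet_skeleton_le {d : ℕ} (h : ∀ v, #(𝒞.unclusteredNeighbors v) ≤ d) :
    𝒞.skeleton.edgeSet.ncard ≤ Fintype.card V * (d + 1) := by
  let out (v : V) : Finset V := 𝒞.unclusteredNeighbors v ∪ (𝒞.center v).toFinset
  have hout : ∀ v, #((out v).image fun u => s(v, u)) ≤ d + 1 := fun v =>
    calc _ ≤ #(out v) := Finset.card_image_le
      _ ≤ #(𝒞.unclusteredNeighbors v) + #(𝒞.center v).toFinset := Finset.card_union_le _ _
      _ ≤ d + 1 := add_le_add (h v) (by cases 𝒞.center v <;> simp)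
  have hcover :
      𝒞.skeleton.edgeSet ⊆ Finset.univ.biUnion fun v => (out v).image fun u => s(v, u) := by
    intro e he
    induction e using Sym2.ind with
    | _ u v =>
      have hcases : v ∈ out u ∨ u ∈ out v := by
        obtain ⟨huv, h⟩ : 𝒞.skeleton.Adj u v := he
        have := huv.symm
        simp only [out, unclusteredNeighbors, Finset.mem_union, Finset.mem_filter,
          Option.mem_toFinset, Option.mem_def, Finset.mem_univ, true_and]
        tauto
      simp only [Finset.coe_biUnion, Set.mem_iUnion, Finset.mem_coe, Finset.mem_univ,
        Finset.mem_image, exists_prop, true_and]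
      exact hcases.elim (fun hv => ⟨u, v, hv, rfl⟩) (fun hu => ⟨v, u, hu, Sym2.eq_swap⟩)
  calc 𝒞.skeleton.edgeSet.ncard
      ≤ #(Finset.univ.biUnion fun v => (out v).image fun u => s(v, u)) := by
        rw [← Set.ncard_coe_finset]
        exact Set.ncard_le_ncard hcover (Finset.finite_toSet _)
    _ ≤ Fintype.card V * (d + 1) := Finset.card_biUnion_le_card_mul _ _ _ fun v _ => hout v

theorem exists_clustering (G : SimpleGraph V) {d : ℕ} (hd : 0 < d) :
    ∃ 𝒞 : Clustering G, #(𝒞.centers Finset.univ) * d ≤ Fintype.card V ∧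
      𝒞.skeleton.edgeSet.ncard ≤ Fintype.card V * d := by
  obtain ⟨𝒞, hlarge, hfew⟩ := exists_card_unclusteredNeighbors_lt G hd
  refine ⟨𝒞, card_centers_mul_le hlarge, ?_⟩
  simpa only [Nat.sub_add_cancel hd] using
    ncard_edgeSet_skeleton_le fun v => Nat.le_sub_one_of_lt (hfew v)

end Existence

/-! ### Path buying -/

section PathBuying

variable [Fintype V]

/-- The triples `(v, c, e)` with `v ∈ R`, `c` a center and `e < 3` for which `H` approximates the
distance from `v` to `c` with additive error at most `e`. Buying the missing edges of a path pays
off when it adds many such triples. -/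
noncomputable def coverage (𝒞 : Clustering G) (R : Finset V) (H : SimpleGraph V) :
    Finset (V × V × ℕ) :=
  {x ∈ R ×ˢ 𝒞.centers Finset.univ ×ˢ Finset.range 3 |
    H.edist x.1 x.2.1 ≤ G.edist x.1 x.2.1 + x.2.2}

theorem coverage_mono {R : Finset V} (h : H ≤ H') : 𝒞.coverage R H ⊆ 𝒞.coverage R H' :=
  Finset.monotone_filter_right _ fun _ _ hx => (SimpleGraph.edist_anti h).trans hx

theorem card_coverage_le (R : Finset V) (H : SimpleGraph V) :
    #(𝒞.coverage R H) ≤ 3 * (#R * #(𝒞.centers Finset.univ)) :=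
  calc _ ≤ #(R ×ˢ 𝒞.centers Finset.univ ×ˢ Finset.range 3) := Finset.card_filter_le _ _
    _ = _ := by rw [Finset.card_product, Finset.card_product, Finset.card_range]; ring

theorem exists_mem_coverage_sdiff {R : Finset V} {v u c : V} {m : ℕ} (hH' : 𝒞.skeleton ≤ H')
    (hH'G : H' ≤ G) (hv : v ∈ R) (hu : 𝒞.center u = some c) (hGm : G.edist v u = m)
    (hH'm : H'.edist v u = m) (hH : ¬ H.edist v c ≤ m + 1) :
    ∃ e, (v, c, e) ∈ 𝒞.coverage R H' \ 𝒞.coverage R H := by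
  have hcenter : c ∈ 𝒞.centers Finset.univ := 𝒞.mem_centers.mpr ⟨u, Finset.mem_univ u, hu⟩
  have hH'c : H'.edist v c ≤ m + 1 := hH'm ▸ SimpleGraph.edist_triangle.trans
    (add_le_add_right (edist_le_one_of_adj (hH' (skeleton_adj_center hu))) _)
  have hGc : G.edist v c ≤ m + 1 := (SimpleGraph.edist_anti hH'G).trans hH'c
  have hmG : m ≤ G.edist v c + 1 := hGm ▸ SimpleGraph.edist_triangle.trans
    (add_le_add_right (edist_le_one_of_adj (𝒞.adj_center hu).symm) _)
  obtain ⟨D, hD⟩ := ENat.ne_top_iff_exists.mp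
    (hGc.trans_lt (by exact_mod_cast ENat.natCast_lt_top (m + 1))).ne
  rw [← hD] at hGc hmG
  norm_cast at hGc hmG
  have he : ((D + (m + 1 - D) : ℕ) : ℕ∞) = m + 1 := by
    rw [Nat.add_sub_cancel' hGc]; norm_cast
  refine ⟨m + 1 - D, ?_⟩
  simp only [coverage, Finset.mem_sdiff, Finset.mem_filter, Finset.mem_product, Finset.mem_range,
    hv, hcenter, true_and, ← hD, ← Nat.cast_add, he]
  exact ⟨⟨by omega, hH'c⟩, fun h => hH h.2⟩

theorem card_coverage_add_card_centers_le {R s : Finset V} {p : ℕ → V} {ℓ : ℕ}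
    (hH : 𝒞.skeleton ≤ H) (hHH' : H ≤ H') (hH'G : H' ≤ G) (hp : IsGeodesic G p ℓ)
    (hp' : IsGeodesic H' p ℓ) (hstart : p 0 ∈ R) (hend : p ℓ ∈ R)
    (hs : ∀ u ∈ s, ∃ i ≤ ℓ, p i = u) (hbad : ¬ H.edist (p 0) (p ℓ) ≤ ℓ + 2) :
    #(𝒞.coverage R H) + #(𝒞.centers s) ≤ #(𝒞.coverage R H') := by
  have hgain : 𝒞.centers s ⊆ (𝒞.coverage R H' \ 𝒞.coverage R H).image (·.2.1) := by
    intro c hc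
    obtain ⟨u, hu, huc⟩ := 𝒞.mem_centers.mp hc
    obtain ⟨i, hi, rfl⟩ := hs u hu
    obtain ⟨v, e, hve⟩ : ∃ v e, (v, c, e) ∈ 𝒞.coverage R H' \ 𝒞.coverage R H := by
      by_cases hclose : H.edist (p 0) c ≤ i + 1
      · have hfar : ¬ H.edist (p ℓ) c ≤ (ℓ - i : ℕ) + 1 := by
          refine fun h => hbad ?_
          calc H.edist (p 0) (p ℓ) ≤ H.edist (p 0) c + H.edist c (p ℓ) :=
                SimpleGraph.edist_triangle
            _ ≤ (i + 1) + ((ℓ - i : ℕ) + 1) :=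
              add_le_add hclose (SimpleGraph.edist_comm.trans_le h)
            _ = ℓ + 2 := by norm_cast; omega
        exact ⟨p ℓ, exists_mem_coverage_sdiff (hH.trans hHH') hH'G hend huc
          (SimpleGraph.edist_comm.trans (hp hi le_rfl))
          (SimpleGraph.edist_comm.trans (hp' hi le_rfl)) hfar⟩
      · exact ⟨p 0, exists_mem_coverage_sdiff (hH.trans hHH') hH'G hstart huc
          (hp.edist_zero_left hi) (hp'.edist_zero_left hi) hclose⟩
    exact Finset.mem_image_of_mem (·.2.1) hve
  have hcard := (Finset.card_le_card hgain).trans Finset.card_image_le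
  rw [Finset.card_sdiff_of_subset (coverage_mono hHH')] at hcard
  have hmono := Finset.card_le_card (coverage_mono (𝒞 := 𝒞) (R := R) hHH')
  omega

theorem exists_edist_eq_and_coverage_gain {R : Finset V} {s t : V} (hH : 𝒞.skeleton ≤ H)
    (hHG : H ≤ G) (hs : s ∈ R) (ht : t ∈ R) (hbad : ¬ H.edist s t ≤ G.edist s t + 2) :
    ∃ H', H ≤ H' ∧ H' ≤ G ∧ H'.edist s t = G.edist s t ∧
      H'.edgeSet.ncard + 3 * #(𝒞.coverage R H) ≤ H.edgeSet.ncard + 3 * #(𝒞.coverage R H') := by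
  have hreach : G.Reachable s t := by
    contrapose! hbad
    simp [SimpleGraph.edist_eq_top_of_not_reachable hbad]
  obtain ⟨p, ℓ, hp, rfl, rfl⟩ := exists_isGeodesic hreach
  let M := missingSteps H p ℓ
  have hMℓ : ∀ i ∈ M, i < ℓ := fun i hi => (mem_missingSteps.mp hi).1
  have hH'G : H ⊔ stepGraph p M ≤ G := sup_le hHG (hp.stepGraph_le hMℓ)
  have hp' : IsGeodesic (H ⊔ stepGraph p M) p ℓ := hp.sup_stepGraph_missingSteps hHG
  have hM_path : ∀ u ∈ M.image p, ∃ i ≤ ℓ, p i = u := fun u hu =>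
    let ⟨i, hi, hiu⟩ := Finset.mem_image.mp hu
    ⟨i, (hMℓ i hi).le, hiu⟩
  refine ⟨H ⊔ stepGraph p M, le_sup_left, hH'G, ?_, ?_⟩
  · rw [hp.edist_zero_left le_rfl, hp'.edist_zero_left le_rfl]
  · rw [hp.edist_zero_left le_rfl] at hbad
    have hgain := card_coverage_add_card_centers_le hH le_sup_left hH'G hp hp' hs ht hM_path hbad
    have hprice : #M ≤ 3 * #(𝒞.centers (M.image p)) := card_missingSteps_le hp hH
    have hsup := ncard_edgeSet_sup_le H (stepGraph p M)
    have hsteps := ncard_edgeSet_stepGraph_le p M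
    omega

theorem exists_isPairwiseSpanner_prod (𝒞 : Clustering G) (R : Finset V) :
    ∃ H, 𝒞.skeleton ≤ H ∧ IsPairwiseSpanner G H (R ×ˢ R) 2 ∧ H.edgeSet.ncard ≤
      𝒞.skeleton.edgeSet.ncard + 9 * (#R * #(𝒞.centers Finset.univ)) := by
  obtain ⟨H, ⟨hskel, hHG, hcost⟩, hmax⟩ := (Set.toFinite {H | 𝒞.skeleton ≤ H ∧ H ≤ G ∧
    H.edgeSet.ncard ≤ 𝒞.skeleton.edgeSet.ncard + 3 * #(𝒞.coverage R H)}).exists_maximal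
      ⟨𝒞.skeleton, le_rfl, 𝒞.skeleton_le, Nat.le_add_right _ _⟩
  refine ⟨H, hskel, ⟨hHG, fun s t hst => ?_⟩, ?_⟩
  · by_contra hbad
    obtain ⟨H', hHH', hH'G, hdist, hgain⟩ :=
      exists_edist_eq_and_coverage_gain hskel hHG hst.1 hst.2 hbad
    have hH'H : H' ≤ H := hmax ⟨hskel.trans hHH', hH'G, by omega⟩ hHH'
    exact hbad ((SimpleGraph.edist_anti hH'H).trans (hdist.trans_le le_self_add))
  · have hcoverage := card_coverage_le (𝒞 := 𝒞) R H
    omega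

end PathBuying

/-! ### Partial paths -/

section PartialPaths

variable [Fintype V]

/-- `E` holds the first and last `L` edges that some shortest path from `s` to `t` lacks in the
skeleton. These ends meet more than `L / 3` clusters each, whose centers form `A` and `B`, and a
spanner containing `E` serves `(s, t)` as soon as it connects some center in `A` well to some
center in `B`. -/
structure IsPartialPath (𝒞 : Clustering G) (L : ℕ) (E : SimpleGraph V) (s t : V)
    (A B : Finset V) : Prop where
  left_subset : A ⊆ 𝒞.centers Finset.univ
  right_subset : B ⊆ 𝒞.centers Finset.univ
  lt_card_left : L < 3 * #A
  lt_card_right : L < 3 * #B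
  edist_le : ∀ ⦃H : SimpleGraph V⦄ ⦃β : ℕ∞⦄ ⦃a b : V⦄, 𝒞.skeleton ≤ H → E ≤ H → a ∈ A → b ∈ B →
    H.edist a b ≤ G.edist a b + β → H.edist s t ≤ G.edist s t + (β + 4)

theorem exists_isPartialPath_of_isGeodesic {p : ℕ → V} {ℓ x y L : ℕ} {M : Finset ℕ}
    (hp : IsGeodesic G p ℓ) (hM : M = missingSteps 𝒞.skeleton p ℓ) (hxy : x ≤ y)
    (hx : L < #{i ∈ M | i ≤ x}) (hy : L < #{j ∈ M | y ≤ j}) :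
    ∃ A B, 𝒞.IsPartialPath L (stepGraph p {i ∈ M | i < x ∨ y < i}) (p 0) (p ℓ) A B := by
  have hM_lt : ∀ i ∈ M, i < ℓ := fun i hi => (mem_missingSteps.mp (hM ▸ hi)).1
  have hM_clustered : ∀ i ∈ M, 𝒞.center (p i) ≠ none ∧ 𝒞.center (p (i + 1)) ≠ none := fun i hi =>
    center_ne_none_of_not_adj (hp.adj_succ (hM_lt i hi)) (mem_missingSteps.mp (hM ▸ hi)).2
  refine ⟨𝒞.centers ({i ∈ M | i ≤ x}.image p),
    𝒞.centers (({j ∈ M | y ≤ j}.image (· + 1)).image p),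
    𝒞.centers_mono (Finset.subset_univ _), 𝒞.centers_mono (Finset.subset_univ _), ?_, ?_, ?_⟩
  · exact hx.trans_le <| card_le_three_mul_card_centers hp
      (fun i hi => (hM_lt i (Finset.mem_filter.mp hi).1).le)
      fun i hi => (hM_clustered i (Finset.mem_filter.mp hi).1).1
  · rw [← Finset.card_image_of_injective _ (add_left_injective 1)] at hy
    refine hy.trans_le (card_le_three_mul_card_centers hp ?_ ?_) <;>
      simp only [Finset.forall_mem_image, Finset.mem_filter, and_imp]
    · exact fun j hj _ => hM_lt j hj
    · exact fun j hj _ => (hM_clustered j hj).2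
  · intro H β a b hskel hE ha hb hab
    simp only [mem_centers, Finset.exists_mem_image, Finset.mem_filter] at ha hb
    obtain ⟨i, ⟨-, hix⟩, ha⟩ := ha
    obtain ⟨j, ⟨hjM, hyj⟩, hb⟩ := hb
    have hjℓ : j + 1 ≤ ℓ := hM_lt j hjM
    rw [hp.edist_zero_left le_rfl]
    refine edist_le_of_detour hp (by omega) hjℓ hskel ?_ ?_ ha hb hab
    · refine hp.edist_le_sub hskel hE i.zero_le (by omega) fun k hk _ hki => ?_
      exact Finset.mem_filter.mpr ⟨hM ▸ hk, Or.inl (by omega)⟩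
    · refine hp.edist_le_sub hskel hE hjℓ le_rfl fun k hk hjk _ => ?_
      exact Finset.mem_filter.mpr ⟨hM ▸ hk, Or.inr (by omega)⟩

theorem exists_complete_or_isPartialPath (𝒞 : Clustering G) (L : ℕ) (s t : V) :
    ∃ E ≤ G, E.edgeSet.ncard ≤ 2 * L ∧
      ((∀ H, 𝒞.skeleton ≤ H → E ≤ H → H.edist s t ≤ G.edist s t) ∨
        ∃ A B, 𝒞.IsPartialPath L E s t A B) := by
  by_cases hreach : G.Reachable s t
  swap
  · exact ⟨⊥, bot_le, by simp, Or.inl fun H _ _ =>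
      (SimpleGraph.edist_eq_top_of_not_reachable hreach).symm ▸ le_top⟩
  obtain ⟨p, ℓ, hp, rfl, rfl⟩ := exists_isGeodesic hreach
  obtain ⟨M, hM⟩ : ∃ M, M = missingSteps 𝒞.skeleton p ℓ := ⟨_, rfl⟩
  have hM_lt : ∀ i ∈ M, i < ℓ := fun i hi => (mem_missingSteps.mp (hM ▸ hi)).1
  rcases le_or_gt #M (2 * L) with hfew | hmany
  · refine ⟨stepGraph p M, hp.stepGraph_le hM_lt, (ncard_edgeSet_stepGraph_le p M).trans hfew,
      Or.inl fun H hskel hE => ?_⟩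
    rw [hp.edist_zero_left le_rfl]
    exact hp.edist_le_sub hskel hE ℓ.zero_le le_rfl fun k hk _ _ => hM ▸ hk
  · obtain ⟨x, hx, y, hy, hxy, hcard_lt, hcard_gt⟩ :=
      exists_le_card_filter_lt_eq_card_filter_gt_eq M hmany
    refine ⟨stepGraph p {i ∈ M | i < x ∨ y < i}, ?_, ?_, Or.inr ?_⟩
    · exact hp.stepGraph_le fun i hi => hM_lt i (Finset.mem_filter.mp hi).1
    · calc _ ≤ #{i ∈ M | i < x ∨ y < i} := ncard_edgeSet_stepGraph_le _ _
        _ ≤ #{i ∈ M | i < x} + #{i ∈ M | y < i} := by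
          rw [Finset.filter_or]
          exact Finset.card_union_le _ _
        _ = 2 * L := by omega
    · refine exists_isPartialPath_of_isGeodesic hp hM hxy ?_ ?_
      · exact hcard_lt ▸ Finset.card_lt_card (Finset.ssubset_iff_of_subset
          (Finset.monotone_filter_right _ fun _ _ => le_of_lt) |>.mpr ⟨x, by simp [hx], by simp⟩)
      · exact hcard_gt ▸ Finset.card_lt_card (Finset.ssubset_iff_of_subset
          (Finset.monotone_filter_right _ fun _ _ => le_of_lt) |>.mpr ⟨y, by simp [hy], by simp⟩)

end PartialPaths

theorem exists_hitting_set_isPartialPath [Fintype V] {ι : Type*} {I : Finset ι} {L : ℕ}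
    {E : ι → SimpleGraph V} {s t : ι → V} {A B : ι → Finset V}
    (hI : ∀ i ∈ I, 𝒞.IsPartialPath L (E i) (s i) (t i) (A i) (B i)) {k : ℝ} (hk : 0 < k)
    (hcenters : (#(𝒞.centers Finset.univ) : ℝ) ≤ k * (L + 1)) :
    ∃ R : Finset V, (#R : ℝ) ≤ 24 * k ∧
      2 * #{i ∈ I | Disjoint (A i) R ∨ Disjoint (B i) R} ≤ #I := by
  have hratio {S : Finset V} (hS : L < 3 * #S) : (#(𝒞.centers Finset.univ) : ℝ) ≤ 3 * k * #S := by
    have hS' : (L + 1 : ℝ) ≤ 3 * #S := by exact_mod_cast hS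
    calc _ ≤ k * (L + 1) := hcenters
      _ ≤ k * (3 * #S) := by gcongr
      _ = 3 * k * #S := by ring
  have hnonempty {S : Finset V} (hS : L < 3 * #S) : S.Nonempty := Finset.card_pos.mp (by omega)
  obtain ⟨R₁, hR₁, hmiss₁⟩ := exists_hitting_set I A (by positivity : 0 < 3 * k) four_pos
    (fun i hi => (hI i hi).left_subset) (fun i hi => hnonempty (hI i hi).lt_card_left)
    (fun i hi => hratio (hI i hi).lt_card_left)
  obtain ⟨R₂, hR₂, hmiss₂⟩ := exists_hitting_set I B (by positivity : 0 < 3 * k) four_pos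
    (fun i hi => (hI i hi).right_subset) (fun i hi => hnonempty (hI i hi).lt_card_right)
    (fun i hi => hratio (hI i hi).lt_card_right)
  refine ⟨R₁ ∪ R₂, ?_, ?_⟩
  · have hunion : (#(R₁ ∪ R₂) : ℝ) ≤ #R₁ + #R₂ := by exact_mod_cast Finset.card_union_le R₁ R₂
    linarith
  · have hunion : #{i ∈ I | Disjoint (A i) (R₁ ∪ R₂) ∨ Disjoint (B i) (R₁ ∪ R₂)} ≤
        #{i ∈ I | Disjoint (A i) R₁} + #{i ∈ I | Disjoint (B i) R₂} := by
      rw [Finset.filter_or]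
      refine (Finset.card_union_le _ _).trans (add_le_add ?_ ?_) <;>
        refine Finset.card_le_card (Finset.monotone_filter_right _ fun i _ hi => ?_)
      · exact (Finset.disjoint_union_right.mp hi).1
      · exact (Finset.disjoint_union_right.mp hi).2
    norm_cast at hmiss₁ hmiss₂
    omega

theorem exists_isPairwiseSpanner_sdiff [Fintype V] (𝒞 : Clustering G) (P : Finset (V × V)) (L : ℕ)
    {k : ℝ} (hk : 0 < k) (hcenters : (#(𝒞.centers Finset.univ) : ℝ) ≤ k * (L + 1)) :
    ∃ H, ∃ P' ⊆ P, 2 * #P' ≤ #P ∧ IsPairwiseSpanner G H (P \ P' : Finset (V × V)) 6 ∧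
      (H.edgeSet.ncard : ℝ) ≤
        𝒞.skeleton.edgeSet.ncard + 216 * k * #(𝒞.centers Finset.univ) + 2 * L * #P := by
  choose E hEG hE hcases using fun x : V × V => 𝒞.exists_complete_or_isPartialPath L x.1 x.2
  obtain ⟨I, hIP, hcomplete, hpartial⟩ : ∃ I ⊆ P,
      (∀ x ∈ P \ I, ∀ H, 𝒞.skeleton ≤ H → E x ≤ H → H.edist x.1 x.2 ≤ G.edist x.1 x.2) ∧
      ∀ x ∈ I, ∃ A B, 𝒞.IsPartialPath L (E x) x.1 x.2 A B :=
    ⟨{x ∈ P | ∃ A B, 𝒞.IsPartialPath L (E x) x.1 x.2 A B}, Finset.filter_subset _ _,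
      fun x hx => (hcases x).resolve_right (by simp_all), by simp⟩
  choose! A B hAB using hpartial
  obtain ⟨R, hR, hmiss⟩ := exists_hitting_set_isPartialPath hAB hk hcenters
  obtain ⟨H₁, hskel, hH₁, hcost⟩ := 𝒞.exists_isPairwiseSpanner_prod R
  let H := H₁ ⊔ ⨆ x ∈ P, E x
  have hEH : ∀ x ∈ P, E x ≤ H := fun x hx =>
    (le_iSup₂ (f := fun x _ => E x) x hx).trans le_sup_right
  refine ⟨H, {x ∈ I | Disjoint (A x) R ∨ Disjoint (B x) R}, (Finset.filter_subset _ _).trans hIP,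
    hmiss.trans (Finset.card_le_card hIP), ⟨sup_le hH₁.le (iSup₂_le fun x _ => hEG x), ?_⟩, ?_⟩
  · intro s t hst
    obtain ⟨hstP, hst⟩ := Finset.mem_sdiff.mp hst
    by_cases hI : (s, t) ∈ I
    · simp only [Finset.mem_filter, hI, true_and, not_or, Finset.not_disjoint_iff] at hst
      obtain ⟨⟨a, ha, haR⟩, b, hb, hbR⟩ := hst
      have hab := (SimpleGraph.edist_anti le_sup_left : H.edist a b ≤ _).trans
        (hH₁.edist_le (Set.mk_mem_prod haR hbR))
      have hst := (hAB _ hI).edist_le (hskel.trans le_sup_left) (hEH _ hstP) ha hb hab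
      exact hst.trans_eq (by norm_num)
    · exact (hcomplete _ (Finset.mem_sdiff.mpr ⟨hstP, hI⟩) H (hskel.trans le_sup_left)
        (hEH _ hstP)).trans le_self_add
  · have hpaths : (⨆ x ∈ P, E x).edgeSet.ncard ≤ #P * (2 * L) :=
      (ncard_edgeSet_biSup_le P E).trans (Finset.sum_le_card_nsmul _ _ _ fun x _ => hE x)
    have hH : (H.edgeSet.ncard : ℝ) ≤ 𝒞.skeleton.edgeSet.ncard +
        9 * (#R * #(𝒞.centers Finset.univ)) + #P * (2 * L) := by
      exact_mod_cast (ncard_edgeSet_sup_le _ _).trans (add_le_add hcost hpaths)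
    have hRk : (#R : ℝ) * #(𝒞.centers Finset.univ) ≤ 24 * k * #(𝒞.centers Finset.univ) := by
      gcongr
    linarith

end Clustering

theorem exists_isPairwiseSpanner_sdiff_rpow [Fintype V] (G : SimpleGraph V) {P : Finset (V × V)}
    (hP : P.Nonempty) :
    ∃ H, ∃ P' ⊆ P, 2 * #P' ≤ #P ∧ IsPairwiseSpanner G H (P \ P' : Finset (V × V)) 6 ∧
      (H.edgeSet.ncard : ℝ) ≤ 220 * Fintype.card V * (#P : ℝ) ^ ((1 : ℝ) / 4) := by
  set n := Fintype.card V
  set q : ℝ := (#P : ℝ) ^ ((1 : ℝ) / 4) with hq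
  have hq_one : 1 ≤ q := Real.one_le_rpow (by exact_mod_cast hP.card_pos) (by norm_num)
  have hq_four : q ^ 4 = #P := by
    rw [hq, ← Real.rpow_natCast, ← Real.rpow_mul (Nat.cast_nonneg _)]
    norm_num
  have hq_pos : 0 < q := by linarith
  have hceil : (⌈q⌉₊ : ℝ) ≤ 2 * q := by linarith [Nat.ceil_lt_add_one hq_pos.le]
  obtain ⟨𝒞, hcenters, hskel⟩ := Clustering.exists_clustering G (Nat.ceil_pos.mpr hq_pos)
  have hcenters_q : #(𝒞.centers Finset.univ) * q ≤ n := by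
    calc _ ≤ #(𝒞.centers Finset.univ) * (⌈q⌉₊ : ℝ) := by gcongr; exact Nat.le_ceil q
      _ ≤ n := by exact_mod_cast hcenters
  have hskel_q : (𝒞.skeleton.edgeSet.ncard : ℝ) ≤ n * (2 * q) := by
    calc _ ≤ n * (⌈q⌉₊ : ℝ) := by exact_mod_cast hskel
      _ ≤ n * (2 * q) := by gcongr
  have hcenters_L : (#(𝒞.centers Finset.univ) : ℝ) ≤ q ^ 2 * (⌊n / q ^ 3⌋₊ + 1) :=
    calc _ ≤ n / q := (le_div_iff₀ hq_pos).mpr hcenters_q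
      _ = q ^ 2 * (n / q ^ 3) := by field_simp
      _ ≤ q ^ 2 * (⌊n / q ^ 3⌋₊ + 1) := by gcongr; exact (Nat.lt_floor_add_one _).le
  obtain ⟨H, P', hP'P, hhalf, hH, hcost⟩ :=
    𝒞.exists_isPairwiseSpanner_sdiff P _ (by positivity) hcenters_L
  refine ⟨H, P', hP'P, hhalf, hH, hcost.trans ?_⟩
  have hdetours : 216 * q ^ 2 * #(𝒞.centers Finset.univ) ≤ 216 * n * q := by
    calc _ = 216 * (#(𝒞.centers Finset.univ) * q) * q := by ring
      _ ≤ 216 * n * q := by gcongr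
  have hends : 2 * (⌊n / q ^ 3⌋₊ : ℝ) * #P ≤ 2 * n * q :=
    calc _ ≤ 2 * (n / q ^ 3) * #P := by gcongr; exact Nat.floor_le (by positivity)
      _ = 2 * n * q := by rw [← hq_four]; field_simp
  linarith

-- The constant is `220 / (1 - 0.9)`, where `0.9` bounds `2 ^ (-1 / 4)`.
theorem exists_isPairwiseSpanner_rpow [Fintype V] (G : SimpleGraph V) (P : Finset (V × V)) :
    ∃ H, IsPairwiseSpanner G H P 6 ∧
      (H.edgeSet.ncard : ℝ) ≤ 2200 * Fintype.card V * (#P : ℝ) ^ ((1 : ℝ) / 4) := by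
  induction hP_card : #P using Nat.strong_induction_on generalizing P with
  | _ m ih =>
  subst hP_card
  rcases P.eq_empty_or_nonempty with rfl | hP
  · exact ⟨⊥, ⟨bot_le, by simp⟩, by simp⟩
  obtain ⟨H, P', hP'P, hhalf, hH, hcost⟩ := exists_isPairwiseSpanner_sdiff_rpow G hP
  have hP_pos := hP.card_pos
  obtain ⟨H', hH', hcost'⟩ := ih _ (by omega) P' rfl
  have hunion := hH.union hH'
  rw [← Finset.coe_union, Finset.sdiff_union_of_subset hP'P] at hunion
  refine ⟨H ⊔ H', hunion, ?_⟩
  have hdecay : (#P' : ℝ) ^ ((1 : ℝ) / 4) ≤ 0.9 * (#P : ℝ) ^ ((1 : ℝ) / 4) := by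
    have hhalf' : (2 : ℝ) * #P' ≤ #P := by exact_mod_cast hhalf
    calc (#P' : ℝ) ^ ((1 : ℝ) / 4) ≤ (0.9 ^ (4 : ℝ) * #P) ^ ((1 : ℝ) / 4) := by
          gcongr
          norm_num
          linarith
      _ = 0.9 * (#P : ℝ) ^ ((1 : ℝ) / 4) := by
          rw [Real.mul_rpow (by positivity) (by positivity), ← Real.rpow_mul (by norm_num)]
          norm_num
  calc ((H ⊔ H').edgeSet.ncard : ℝ) ≤ H.edgeSet.ncard + H'.edgeSet.ncard := by
        exact_mod_cast ncard_edgeSet_sup_le H H'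
    _ ≤ 220 * Fintype.card V * (#P : ℝ) ^ ((1 : ℝ) / 4) +
        2200 * Fintype.card V * (0.9 * (#P : ℝ) ^ ((1 : ℝ) / 4)) := by
      gcongr
      exact hcost'.trans (by gcongr)
    _ = 2200 * Fintype.card V * (#P : ℝ) ^ ((1 : ℝ) / 4) := by ring

theorem unweighted_pairwise_plus_six_spanner_general {V : Type*} [Fintype V] (G : SimpleGraph V)
    (P : Set (V × V)) :
    ∃ H : SimpleGraph V, H ≤ G ∧
      (H.edgeSet.ncard : ℝ) ≤
        2200 * (Fintype.card V : ℝ) * (P.ncard : ℝ) ^ ((1 : ℝ) / 4) ∧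
      ∀ s t : V, (s, t) ∈ P → H.edist s t ≤ G.edist s t + 6 := by
  obtain ⟨H, hH, hcost⟩ := exists_isPairwiseSpanner_rpow G P.toFinset
  rw [← Set.ncard_eq_toFinset_card'] at hcost
  exact ⟨H, hH.le, hcost, fun s t hst => hH.edist_le (by simpa using hst)⟩

/-- Every connected unweighted graph `G` on `n` vertices and every set
`𝒫 ⊆ V × V` of vertex pairs admits a subgraph `H` on at most `C·n·|𝒫|^(1/4)` edges (for a
universal constant `C`) such that `d_H(s,t) ≤ d_G(s,t) + 6` for every `(s,t) ∈ 𝒫`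
(distances measured as extended naturals, so unreachable pairs have infinite distance). -/
theorem unweighted_pairwise_plus_six_spanner :
    ∃ C : ℝ, 0 < C ∧
      ∀ (V : Type) [Fintype V] (G : SimpleGraph V), G.Connected →
        ∀ P : Set (V × V),
          ∃ H : SimpleGraph V, H ≤ G ∧
            (H.edgeSet.ncard : ℝ) ≤
              C * (Fintype.card V : ℝ) * (P.ncard : ℝ) ^ ((1 : ℝ) / 4) ∧
            ∀ s t : V, (s, t) ∈ P → H.edist s t ≤ G.edist s t + 6 := by
  exact ⟨2200, by norm_num, fun V _ G _ P => unweighted_pairwise_plus_six_spanner_general G P⟩
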